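/- Let C be a category with finite products and M a class of morphisms of C that contains all isomorphisms, is closed under composition, and is closed under binary products. If X is an M-coextensive object of C, then X has co-disjoint products: every product projection of X is an epimorphism, and for every binary product diagram (π₁ : X → A, π₂ : X → B) a pushout of π₁ along π₂ exists whose vertex is a terminal object. -/

import Mathlib

open CategoryTheory CategoryTheory.Limits

universe v u

variable {C : Type u} [Category.{v} C]

/-- `(p, q)` is a binary product diagram, exhibiting `X` as the product of `A` and `B`. -/
def IsBinaryProduct {X A B : C} (p : X ⟶ A) (q : X ⟶ B) : Prop :=
  Nonempty (IsLimit (BinaryFan.mk p q))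

/-- `p : X ⟶ A` is a product projection. -/
def IsProductProjection {X A : C} (p : X ⟶ A) : Prop :=
  ∃ (B : C) (q : X ⟶ B), IsBinaryProduct p q

/-- A pushout square whose two legs belong to the class `M`. -/
def IsMPushout (M : MorphismProperty C) {Z A B P : C}
    (f : Z ⟶ A) (g : Z ⟶ B) (a : A ⟶ P) (b : B ⟶ P) : Prop :=
  IsPushout f g a b ∧ M a ∧ M b

/-- `X` is an `M`-coextensive object. -/
structure MCoextensive (M : MorphismProperty C) (X : C) : Prop where
  pushout_exists : ∀ ⦃Y A : C⦄ (m : X ⟶ Y) (p : X ⟶ A), M m → IsProductProjection p →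
    ∃ (P : C) (a : A ⟶ P) (b : Y ⟶ P), IsMPushout M p m a b
  isBinaryProduct_iff : ∀ ⦃A₁ A₂ Y B₁ B₂ : C⦄ (π₁ : X ⟶ A₁) (π₂ : X ⟶ A₂)
    (f : X ⟶ Y) (p₁ : A₁ ⟶ B₁) (p₂ : A₂ ⟶ B₂) (π₁' : Y ⟶ B₁) (π₂' : Y ⟶ B₂),
    IsBinaryProduct π₁ π₂ → M f → M p₁ → M p₂ →
    π₁ ≫ p₁ = f ≫ π₁' → π₂ ≫ p₂ = f ≫ π₂' →
    (IsBinaryProduct π₁' π₂' ↔ (IsMPushout M π₁ f p₁ π₁' ∧ IsMPushout M π₂ f p₂ π₂'))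

/-- The class of product projections. -/
def projections (C : Type u) [Category.{v} C] : MorphismProperty C :=
  fun _ _ f => IsProductProjection f

/-- `X` is projection-coextensive. -/
def ProjectionCoextensive (X : C) : Prop := MCoextensive (projections C) X

/-- `f` is a regular epimorphism (a coequalizer of some parallel pair). -/
def IsRegularEpimorphism {X Y : C} (f : X ⟶ Y) : Prop :=
  ∃ (W : C) (a b : W ⟶ X) (h : a ≫ f = b ≫ f), Nonempty (IsColimit (Cofork.ofπ f h))

/-- The class of regular epimorphisms. -/
def regularEpis (C : Type u) [Category.{v} C] : MorphismProperty C :=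
  fun _ _ f => IsRegularEpimorphism f

/-- `X` is regularly-coextensive. -/
def RegularlyCoextensive (X : C) : Prop := MCoextensive (regularEpis C) X

/-- A regular category: finitely complete, coequalizers of kernel pairs, and
regular epimorphisms are stable under pullback. -/
class IsRegularCategory (C : Type u) [Category.{v} C] [HasFiniteLimits C] : Prop where
  hasCoequalizer_kernelPair : ∀ {X Y : C} (f : X ⟶ Y),
    HasCoequalizer (pullback.fst f f) (pullback.snd f f)
  regularEpi_stable : ∀ {X Y Z : C} (f : X ⟶ Y) (g : Z ⟶ Y),
    IsRegularEpimorphism f → IsRegularEpimorphism (pullback.snd f g)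

/-- `X` has global support: the unique morphism to the terminal object is a regular epi. -/
def HasGlobalSupport [HasTerminal C] (X : C) : Prop :=
  IsRegularEpimorphism (terminal.from X)

/-!
Every morphism of product diagrams out of an `M`-coextensive object `X` with components in `M`
consists of two pushout squares with legs in `M`. Let `X = A × B`, with projections `p` and `q`.
* The identity of `A × B` shows that `p` is in `M`.
* The morphism from `X × 1` to `A × 1` induced by `p` shows that `A ⟶ 1` is in `M`, and
  symmetrically `B ⟶ 1` is in `M`.
* Hence `p`, viewed as the morphism from `A × B` to `A × 1` induced by `B ⟶ 1`, gives two
  pushouts: that of `p` along itself has identity legs, so `p` is epi, and that of `q` along `p`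
  has vertex `1`.
-/

theorem IsBinaryProduct.symm {X A B : C} {p : X ⟶ A} {q : X ⟶ B} (h : IsBinaryProduct p q) :
    IsBinaryProduct q p :=
  h.map BinaryFan.isLimitFlip

theorem isBinaryProduct_id_of_isTerminal {T : C} (hT : IsTerminal T) {X : C} (t : X ⟶ T) :
    IsBinaryProduct (𝟙 X) t :=
  (BinaryFan.isLimit_iff_isIso_fst hT _).2 (inferInstanceAs (IsIso (𝟙 X)))

namespace MCoextensive

variable {M : MorphismProperty C} [M.ContainsIdentities] {X A B T : C}

theorem mem_of_isProductProjection (hX : MCoextensive M X) {p : X ⟶ A}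
    (hp : IsProductProjection p) : M p := by
  obtain ⟨B, q, h⟩ := hp
  obtain ⟨⟨-, -, hpM⟩, -⟩ := (hX.isBinaryProduct_iff p q (𝟙 X) (𝟙 A) (𝟙 B) p q h
    (M.id_mem X) (M.id_mem A) (M.id_mem B) (by simp) (by simp)).1 h
  exact hpM

theorem isTerminal_from_mem_of_isProductProjection (hX : MCoextensive M X) (hT : IsTerminal T)
    {p : X ⟶ A} (hp : IsProductProjection p) : M (hT.from A) := by
  have hpM : M p := hX.mem_of_isProductProjection hp
  obtain ⟨-, -, -, hA⟩ := (hX.isBinaryProduct_iff (𝟙 X) (hT.from X) p p (𝟙 T) (𝟙 A) (hT.from A)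
    (isBinaryProduct_id_of_isTerminal hT _) hpM hpM (M.id_mem T) (by simp)
    (hT.hom_ext _ _)).1 (isBinaryProduct_id_of_isTerminal hT _)
  exact hA

theorem isPushout_self_and_isPushout_terminal (hX : MCoextensive M X) (hT : IsTerminal T)
    {p : X ⟶ A} {q : X ⟶ B} (h : IsBinaryProduct p q) :
    IsPushout p p (𝟙 A) (𝟙 A) ∧ IsPushout q p (hT.from B) (hT.from A) := by
  have hp : M p := hX.mem_of_isProductProjection ⟨B, q, h⟩
  have hB : M (hT.from B) := hX.isTerminal_from_mem_of_isProductProjection hT ⟨A, p, h.symm⟩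
  obtain ⟨⟨hpp, -⟩, ⟨hqp, -⟩⟩ := (hX.isBinaryProduct_iff p q p (𝟙 A) (hT.from B) (𝟙 A) (hT.from A)
    h hp (M.id_mem A) hB rfl (hT.hom_ext _ _)).1 (isBinaryProduct_id_of_isTerminal hT _)
  exact ⟨hpp, hqp⟩

theorem epi_of_isProductProjection [HasTerminal C] (hX : MCoextensive M X) {p : X ⟶ A}
    (hp : IsProductProjection p) : Epi p := by
  obtain ⟨B, q, h⟩ := hp
  exact (epi_iff_isPushout p).2 (hX.isPushout_self_and_isPushout_terminal terminalIsTerminal h).1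

theorem isPushout_terminal (hX : MCoextensive M X) (hT : IsTerminal T) {p : X ⟶ A} {q : X ⟶ B}
    (h : IsBinaryProduct p q) : IsPushout p q (hT.from A) (hT.from B) :=
  (hX.isPushout_self_and_isPushout_terminal hT h).2.flip

end MCoextensive

theorem mCoextensive_codisjoint_products_general [HasTerminal C] (M : MorphismProperty C)
    [M.ContainsIdentities] (X : C) (hX : MCoextensive M X) :
    (∀ ⦃A : C⦄ (p : X ⟶ A), IsProductProjection p → Epi p) ∧
    (∀ ⦃A B : C⦄ (π₁ : X ⟶ A) (π₂ : X ⟶ B), IsBinaryProduct π₁ π₂ →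
      ∃ (P : C) (a : A ⟶ P) (b : B ⟶ P), IsPushout π₁ π₂ a b ∧ Nonempty (IsTerminal P)) :=
  ⟨fun _ _ hp => hX.epi_of_isProductProjection hp,
    fun _ _ _ _ h => ⟨⊤_ C, _, _, hX.isPushout_terminal terminalIsTerminal h,
      ⟨terminalIsTerminal⟩⟩⟩

/-- An `M`-coextensive object has co-disjoint products: its product projections are
epimorphisms, and the pushout of complementary product projections is terminal. -/
theorem mCoextensive_codisjoint_products
    {C : Type u} [Category.{v} C] [HasFiniteProducts C] (M : MorphismProperty C)
    (hiso : ∀ ⦃A B : C⦄ (f : A ⟶ B), IsIso f → M f)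
    (hcomp : ∀ ⦃A B D : C⦄ (f : A ⟶ B) (g : B ⟶ D), M f → M g → M (f ≫ g))
    (hprod : ∀ ⦃A B A' B' : C⦄ (f : A ⟶ B) (g : A' ⟶ B'), M f → M g → M (prod.map f g))
    (X : C) (hX : MCoextensive M X) :
    (∀ ⦃A : C⦄ (p : X ⟶ A), IsProductProjection p → Epi p) ∧
    (∀ ⦃A B : C⦄ (π₁ : X ⟶ A) (π₂ : X ⟶ B), IsBinaryProduct π₁ π₂ →
      ∃ (P : C) (a : A ⟶ P) (b : B ⟶ P), IsPushout π₁ π₂ a b ∧ Nonempty (IsTerminal P)) := by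
  have : M.ContainsIdentities := ⟨fun A => hiso (𝟙 A) inferInstance⟩
  exact mCoextensive_codisjoint_products_general M X hX
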